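/- Suppose w ≡ 0 and w̄ ≡ 0, x₀ = x̄₀ ∈ ℝⁿ, and r̄(0) and θ(0) have the same distribution on 𝔛. Then E[‖x(k)‖²] = E[‖x̄(k)‖²] for every k ≥ 0, where ‖·‖ is the Euclidean norm on ℝⁿ. -/

import Mathlib

open MeasureTheory ProbabilityTheory Matrix

noncomputable section

/-- The state space `[N] × [M] × [N] × [T]` of the extended process `r̄`.
`Fin N`, `Fin M`, `Fin T` play the roles of `[N] = {1,…,N}`, `[M]`, `[T]`
(with `Fin T` being the 0-indexed version of `[T] = {1,…,T}`, i.e. `δ ∈ [T]`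
corresponds to `δ - 1 : Fin T`). -/
abbrev XT (NN MM T : ℕ) : Type := Fin NN × Fin MM × Fin NN × Fin T

/-- `X` is a time-homogeneous Markov chain with transition probability matrix `P`:
for every `k`, every state `j` and every sequence of states `i`,
`Pr(X(k+1) = j ∧ X(l) = i l for all l ≤ k) = P (i k) j * Pr(X(l) = i l for all l ≤ k)`. -/
def IsMarkovChain {Ω : Type} {_mΩ : MeasurableSpace Ω} (μ : Measure Ω) {S : Type}
    (X : ℕ → Ω → S) (P : S → S → ℝ) : Prop :=
  ∀ (k : ℕ) (j : S) (i : ℕ → S),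
    (μ {ω | X (k + 1) ω = j ∧ ∀ l ≤ k, X l ω = i l}).toReal
      = P (i k) j * (μ {ω | ∀ l ≤ k, X l ω = i l}).toReal

/-- `⌊m⌋_T`, the unique element of `{0,…,T-1}` congruent to `m` modulo `T`, as `Fin T`. -/
def intToFin (T : ℕ) [NeZero T] (a : ℤ) : Fin T :=
  ⟨(a % (T : ℤ)).toNat, by
    have hT : 0 < (T : ℤ) := by
      exact_mod_cast Nat.pos_of_ne_zero (NeZero.ne T)
    have h1 : 0 ≤ a % (T : ℤ) := Int.emod_nonneg a (by omega)
    have h2 : a % (T : ℤ) < (T : ℤ) := Int.emod_lt_of_pos a hT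
    omega⟩

-- `τ(k)`: the most recent observation time `≤ k` (i.e. the largest `j ≤ k` with
-- `f(s(j)) = 1`), or `τ₀` if no observation has occurred up to time `k` (`k < t₀`).
open Classical in
def tauZ {Ω : Type} {MM : ℕ} (s : ℕ → Ω → Fin MM) (f : Fin MM → Bool)
    (τ₀ : ℤ) (k : ℕ) (ω : Ω) : ℤ :=
  if ∃ j ≤ k, f (s j ω) = true
  then ((Nat.findGreatest (fun j => f (s j ω) = true) k : ℕ) : ℤ)
  else τ₀

-- `σ(k) = r(τ(k))` if an observation occurred by time `k` (i.e. `k ≥ t₀`), else `σ₀`.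
open Classical in
def sigmaProc {Ω : Type} {NN MM : ℕ} (r : ℕ → Ω → Fin NN) (s : ℕ → Ω → Fin MM)
    (f : Fin MM → Bool) (σ₀ : Fin NN) (k : ℕ) (ω : Ω) : Fin NN :=
  if ∃ j ≤ k, f (s j ω) = true
  then r (Nat.findGreatest (fun j => f (s j ω) = true) k) ω
  else σ₀

/-- `ρ(k) = ⌊k - τ(k)⌋_T + 1 ∈ [T]`, represented 0-indexed as `⌊k - τ(k)⌋_T : Fin T`. -/
def rhoProc {Ω : Type} {MM T : ℕ} [NeZero T] (s : ℕ → Ω → Fin MM) (f : Fin MM → Bool)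
    (τ₀ : ℤ) (k : ℕ) (ω : Ω) : Fin T :=
  intToFin T ((k : ℤ) - tauZ s f τ₀ k ω)

/-- The extended process `r̄(k) = (r(k), s(k), σ(k), ρ(k))`. -/
def rbarProc {Ω : Type} {NN MM T : ℕ} [NeZero T] (r : ℕ → Ω → Fin NN)
    (s : ℕ → Ω → Fin MM) (f : Fin MM → Bool) (τ₀ : ℤ) (σ₀ : Fin NN)
    (k : ℕ) (ω : Ω) : XT NN MM T :=
  (r k ω, s k ω, sigmaProc r s f σ₀ k ω, rhoProc s f τ₀ k ω)

/-- Membership in `𝔛`: if `f(β) = 1` then `α = γ` and `δ = 1` (0-indexed: `δ = 0`). -/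
def inX {NN MM T : ℕ} [NeZero T] (f : Fin MM → Bool) (χ : XT NN MM T) : Prop :=
  f χ.2.1 = true → χ.1 = χ.2.2.1 ∧ χ.2.2.2 = 0

/-- The transition probabilities `p̄_{χχ'}` of the extended chain. The condition
`⌊δ' - δ - 1⌋_T = 0` for `δ, δ' ∈ [T]` is, in 0-indexed form, `δ' = δ + 1` in `Fin T`. -/
def pbar {NN MM T : ℕ} [NeZero T] (P : Matrix (Fin NN) (Fin NN) ℝ)
    (Q : Matrix (Fin MM) (Fin MM) ℝ) (f : Fin MM → Bool) (χ χ' : XT NN MM T) : ℝ :=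
  (if f χ'.2.1 = true
    then (if χ'.1 = χ'.2.2.1 ∧ χ'.2.2.2 = 0 then (1 : ℝ) else 0)
    else (if χ'.2.2.1 = χ.2.2.1 ∧ χ'.2.2.2 = χ.2.2.2 + 1 then (1 : ℝ) else 0))
  * P χ.1 χ'.1 * Q χ.2.1 χ'.2.1

/-- The state trajectory of the closed-loop system
`x(k+1) = A(mode(k)) x(k) + E(mode(k)) w(k)`, `x(0) = x₀`. -/
def traj {Ω S : Type} {n q : ℕ}
    (Amat : S → Matrix (Fin n) (Fin n) ℝ) (Emat : S → Matrix (Fin n) (Fin q) ℝ)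
    (mode : ℕ → Ω → S) (w : ℕ → Ω → Fin q → ℝ) (x0 : Fin n → ℝ) : ℕ → Ω → Fin n → ℝ
  | 0, _ => x0
  | (k + 1), ω =>
      (Amat (mode k ω)).mulVec (traj Amat Emat mode w x0 k ω)
        + (Emat (mode k ω)).mulVec (w k ω)

/-- `A_{K,χ} = A_α + B_α K_{γ,δ}`. -/
def AKmat {NN MM T n m : ℕ} (A : Fin NN → Matrix (Fin n) (Fin n) ℝ)
    (B : Fin NN → Matrix (Fin n) (Fin m) ℝ)
    (K : Fin NN → Fin T → Matrix (Fin m) (Fin n) ℝ) (χ : XT NN MM T) :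
    Matrix (Fin n) (Fin n) ℝ :=
  A χ.1 + B χ.1 * K χ.2.2.1 χ.2.2.2

/-- `C_{K,χ} = C_α + D_α K_{γ,δ}`. -/
def CKmat {NN MM T n m ℓ : ℕ} (C : Fin NN → Matrix (Fin ℓ) (Fin n) ℝ)
    (D : Fin NN → Matrix (Fin ℓ) (Fin m) ℝ)
    (K : Fin NN → Fin T → Matrix (Fin m) (Fin n) ℝ) (χ : XT NN MM T) :
    Matrix (Fin ℓ) (Fin n) ℝ :=
  C χ.1 + D χ.1 * K χ.2.2.1 χ.2.2.2

/-- Squared Euclidean norm of a vector, as an extended nonnegative real. -/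
def sqE {d : ℕ} (v : Fin d → ℝ) : ENNReal := ENNReal.ofReal (∑ i, (v i) ^ 2)

-- The operator `D̄_χ(R) = ∑_{χ' ∈ 𝔛} p̄_{χ'χ} R_{χ'}`.
open Classical in
def Dop {NN MM T n : ℕ} [NeZero T] (P : Matrix (Fin NN) (Fin NN) ℝ)
    (Q : Matrix (Fin MM) (Fin MM) ℝ) (f : Fin MM → Bool)
    (R : XT NN MM T → Matrix (Fin n) (Fin n) ℝ) (χ : XT NN MM T) :
    Matrix (Fin n) (Fin n) ℝ :=
  ∑ χ' : XT NN MM T, if inX f χ' then pbar P Q f χ' χ • R χ' else 0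

-- The operator `F̄_χ(Z) = ∑_{χ' ∈ 𝔛} p̄_{χχ'} Z_{χ,χ'}`.
open Classical in
def Fop {NN MM T n : ℕ} [NeZero T] (P : Matrix (Fin NN) (Fin NN) ℝ)
    (Q : Matrix (Fin MM) (Fin MM) ℝ) (f : Fin MM → Bool)
    (Z : XT NN MM T → XT NN MM T → Matrix (Fin n) (Fin n) ℝ) (χ : XT NN MM T) :
    Matrix (Fin n) (Fin n) ℝ :=
  ∑ χ' : XT NN MM T, if inX f χ' then pbar P Q f χ χ' • Z χ χ' else 0

/-- A pair `(γ,δ) ∈ [N] × [T]` is admissible if `(α,β,γ,δ) ∈ 𝔛` for some `α, β`. -/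
def Admissible {NN MM T : ℕ} [NeZero T] (f : Fin MM → Bool) (g : Fin NN) (d : Fin T) : Prop :=
  ∃ (α : Fin NN) (β : Fin MM), inX (T := T) f (α, β, g, d)

/-- A realization, on some probability space, of the pair of independent
time-homogeneous Markov chains `(r, s)` with transition matrices `P` and `Q`. -/
structure MJLSReal (NN MM : ℕ) (P : Matrix (Fin NN) (Fin NN) ℝ)
    (Q : Matrix (Fin MM) (Fin MM) ℝ) : Type 1 where
  Ω : Type
  inst : MeasurableSpace Ω
  μ : @Measure Ω inst
  prob : IsProbabilityMeasure μ
  r : ℕ → Ω → Fin NN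
  s : ℕ → Ω → Fin MM
  meas_r : ∀ k, Measurable[inst] (r k)
  meas_s : ∀ k, Measurable[inst] (s k)
  markov_r : IsMarkovChain μ r fun i j => P i j
  markov_s : IsMarkovChain μ s fun i j => Q i j
  indep : IndepFun (fun ω l => r l ω) (fun ω l => s l ω) μ

/-- A realization, on some probability space, of a time-homogeneous Markov chain `θ`
taking values in `𝔛` with transition probabilities `p̄`. -/
structure ThetaReal (NN MM T : ℕ) [NeZero T] (P : Matrix (Fin NN) (Fin NN) ℝ)
    (Q : Matrix (Fin MM) (Fin MM) ℝ) (f : Fin MM → Bool) : Type 1 where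
  Ω : Type
  inst : MeasurableSpace Ω
  μ : @Measure Ω inst
  prob : IsProbabilityMeasure μ
  θ : ℕ → Ω → XT NN MM T
  meas : ∀ k, Measurable[inst] (θ k)
  mem : ∀ k ω, inX f (θ k ω)
  markov : IsMarkovChain μ θ (pbar P Q f)

/-- Mean square stability of the closed-loop system `Σ_K`: there are `c > 0` and
`λ ∈ [0,1)` such that for every realization, every deterministic initialization
(`r(0) = r₀`, `s(0) = s₀` a.s., together with `σ₀` and `τ₀ ≤ 0`, so that `r̄(0)`
is a deterministic element of `𝔛`), every `x₀` and every `k`,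
`E[‖x(k)‖²] ≤ c λ^k ‖x₀‖²` (with `w ≡ 0`). -/
def MeanSquareStable {NN MM T n m q : ℕ} [NeZero T]
    (P : Matrix (Fin NN) (Fin NN) ℝ) (Qm : Matrix (Fin MM) (Fin MM) ℝ) (f : Fin MM → Bool)
    (A : Fin NN → Matrix (Fin n) (Fin n) ℝ) (B : Fin NN → Matrix (Fin n) (Fin m) ℝ)
    (E : Fin NN → Matrix (Fin n) (Fin q) ℝ)
    (K : Fin NN → Fin T → Matrix (Fin m) (Fin n) ℝ) : Prop :=
  ∃ c : ℝ, 0 < c ∧ ∃ lam : ℝ, 0 ≤ lam ∧ lam < 1 ∧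
    ∀ (S : MJLSReal NN MM P Qm) (τ₀ : ℤ), τ₀ ≤ 0 →
      ∀ (σ₀ r₀ : Fin NN) (s₀ : Fin MM),
        (∀ᵐ ω ∂S.μ, S.r 0 ω = r₀ ∧ S.s 0 ω = s₀) →
        ∀ (x0 : Fin n → ℝ) (k : ℕ),
          (∫⁻ ω, sqE (traj (AKmat A B K) (fun χ => E χ.1)
              (rbarProc S.r S.s f τ₀ σ₀) (fun _ _ => 0) x0 k ω) ∂S.μ)
            ≤ ENNReal.ofReal (c * lam ^ k * ∑ i, (x0 i) ^ 2)

/-- Mean square stability of `Σ̄_K` (the system driven by the chain `θ`). -/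
def MeanSquareStableBar {NN MM T n m q : ℕ} [NeZero T]
    (P : Matrix (Fin NN) (Fin NN) ℝ) (Qm : Matrix (Fin MM) (Fin MM) ℝ) (f : Fin MM → Bool)
    (A : Fin NN → Matrix (Fin n) (Fin n) ℝ) (B : Fin NN → Matrix (Fin n) (Fin m) ℝ)
    (E : Fin NN → Matrix (Fin n) (Fin q) ℝ)
    (K : Fin NN → Fin T → Matrix (Fin m) (Fin n) ℝ) : Prop :=
  ∃ c : ℝ, 0 < c ∧ ∃ lam : ℝ, 0 ≤ lam ∧ lam < 1 ∧
    ∀ (S : ThetaReal NN MM T P Qm f) (χ : XT NN MM T), inX f χ →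
      (∀ᵐ ω ∂S.μ, S.θ 0 ω = χ) →
      ∀ (x0 : Fin n → ℝ) (k : ℕ),
        (∫⁻ ω, sqE (traj (AKmat A B K) (fun χ' => E χ'.1) S.θ (fun _ _ => 0) x0 k ω) ∂S.μ)
          ≤ ENNReal.ofReal (c * lam ^ k * ∑ i, (x0 i) ^ 2)

/-- The impulse disturbance `w = e_i φ`, i.e. `w(0) = e_i` and `w(k) = 0` for `k ≥ 1`. -/
def impulse {Ω : Type} (q : ℕ) (i : Fin q) : ℕ → Ω → Fin q → ℝ :=
  fun k _ j => if k = 0 ∧ j = i then 1 else 0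

/-- `∑_k E[‖z(k; 0, χ, e_i φ)‖²]` for `Σ_K` on a given realization with data `(τ₀, σ₀)`. -/
def H2TermSigma {NN MM T n m q ℓ : ℕ} [NeZero T]
    {P : Matrix (Fin NN) (Fin NN) ℝ} {Qm : Matrix (Fin MM) (Fin MM) ℝ}
    (S : MJLSReal NN MM P Qm) (f : Fin MM → Bool) (τ₀ : ℤ) (σ₀ : Fin NN)
    (A : Fin NN → Matrix (Fin n) (Fin n) ℝ) (B : Fin NN → Matrix (Fin n) (Fin m) ℝ)
    (C : Fin NN → Matrix (Fin ℓ) (Fin n) ℝ) (D : Fin NN → Matrix (Fin ℓ) (Fin m) ℝ)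
    (E : Fin NN → Matrix (Fin n) (Fin q) ℝ)
    (K : Fin NN → Fin T → Matrix (Fin m) (Fin n) ℝ) (i : Fin q) : ENNReal :=
  ∑' k : ℕ, ∫⁻ ω, sqE ((CKmat C D K (rbarProc S.r S.s f τ₀ σ₀ k ω)).mulVec
      (traj (AKmat A B K) (fun χ => E χ.1) (rbarProc S.r S.s f τ₀ σ₀)
        (impulse q i) 0 k ω)) ∂S.μ

-- `‖Σ_K‖₂² < γ`, where `‖Σ_K‖₂² = ∑_{i=1}^q ∑_{χ ∈ 𝔛} μ̄(χ) ‖z(⬝;0,χ,e_iφ)‖₂²` and the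
-- expectations are over arbitrary realizations with deterministic initialization `r̄(0) = χ`.
open Classical in
def H2SqLtSigma {NN MM T n m q ℓ : ℕ} [NeZero T]
    (P : Matrix (Fin NN) (Fin NN) ℝ) (Qm : Matrix (Fin MM) (Fin MM) ℝ) (f : Fin MM → Bool)
    (A : Fin NN → Matrix (Fin n) (Fin n) ℝ) (B : Fin NN → Matrix (Fin n) (Fin m) ℝ)
    (C : Fin NN → Matrix (Fin ℓ) (Fin n) ℝ) (D : Fin NN → Matrix (Fin ℓ) (Fin m) ℝ)
    (E : Fin NN → Matrix (Fin n) (Fin q) ℝ)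
    (K : Fin NN → Fin T → Matrix (Fin m) (Fin n) ℝ)
    (μbar : XT NN MM T → ℝ) (γ : ℝ) : Prop :=
  ∀ (S : Fin q → XT NN MM T → MJLSReal NN MM P Qm)
    (τ : Fin q → XT NN MM T → ℤ) (σv : Fin q → XT NN MM T → Fin NN),
    (∀ i χ, inX f χ → τ i χ ≤ 0 ∧
        (∀ᵐ ω ∂(S i χ).μ, rbarProc (S i χ).r (S i χ).s f (τ i χ) (σv i χ) 0 ω = χ)) →
    (∑ i : Fin q, ∑ χ : XT NN MM T,
        if inX f χ
        then ENNReal.ofReal (μbar χ) * H2TermSigma (S i χ) f (τ i χ) (σv i χ) A B C D E K i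
        else 0)
      < ENNReal.ofReal γ

/-- `∑_k E[‖z̄(k; 0, χ, e_i φ)‖²]` for `Σ̄_K` on a given realization of `θ`. -/
def H2TermBar {NN MM T n m q ℓ : ℕ} [NeZero T]
    {P : Matrix (Fin NN) (Fin NN) ℝ} {Qm : Matrix (Fin MM) (Fin MM) ℝ} {f : Fin MM → Bool}
    (S : ThetaReal NN MM T P Qm f)
    (A : Fin NN → Matrix (Fin n) (Fin n) ℝ) (B : Fin NN → Matrix (Fin n) (Fin m) ℝ)
    (C : Fin NN → Matrix (Fin ℓ) (Fin n) ℝ) (D : Fin NN → Matrix (Fin ℓ) (Fin m) ℝ)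
    (E : Fin NN → Matrix (Fin n) (Fin q) ℝ)
    (K : Fin NN → Fin T → Matrix (Fin m) (Fin n) ℝ) (i : Fin q) : ENNReal :=
  ∑' k : ℕ, ∫⁻ ω, sqE ((CKmat C D K (S.θ k ω)).mulVec
      (traj (AKmat A B K) (fun χ => E χ.1) S.θ (impulse q i) 0 k ω)) ∂S.μ

-- `‖Σ̄_K‖₂² < γ` (the `H₂` norm of `Σ̄_K`, defined with `θ` in place of `r̄`).
open Classical in
def H2SqLtBar {NN MM T n m q ℓ : ℕ} [NeZero T]
    (P : Matrix (Fin NN) (Fin NN) ℝ) (Qm : Matrix (Fin MM) (Fin MM) ℝ) (f : Fin MM → Bool)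
    (A : Fin NN → Matrix (Fin n) (Fin n) ℝ) (B : Fin NN → Matrix (Fin n) (Fin m) ℝ)
    (C : Fin NN → Matrix (Fin ℓ) (Fin n) ℝ) (D : Fin NN → Matrix (Fin ℓ) (Fin m) ℝ)
    (E : Fin NN → Matrix (Fin n) (Fin q) ℝ)
    (K : Fin NN → Fin T → Matrix (Fin m) (Fin n) ℝ)
    (μbar : XT NN MM T → ℝ) (γ : ℝ) : Prop :=
  ∀ (S : Fin q → XT NN MM T → ThetaReal NN MM T P Qm f),
    (∀ i χ, inX f χ → (∀ᵐ ω ∂(S i χ).μ, (S i χ).θ 0 ω = χ)) →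
    (∑ i : Fin q, ∑ χ : XT NN MM T,
        if inX f χ
        then ENNReal.ofReal (μbar χ) * H2TermBar (S i χ) A B C D E K i
        else 0)
      < ENNReal.ofReal γ

/-- The σ-algebra `Θ_k` generated by `r(0), s(0), …, r(k), s(k)`, for a realization. -/
def sigFiltSigma {NN MM : ℕ} {P : Matrix (Fin NN) (Fin NN) ℝ}
    {Q : Matrix (Fin MM) (Fin MM) ℝ} (S : MJLSReal NN MM P Q) (k : ℕ) :
    MeasurableSpace S.Ω :=
  ⨆ j ∈ Finset.range (k + 1),
    (MeasurableSpace.comap (S.r j) inferInstance ⊔ MeasurableSpace.comap (S.s j) inferInstance)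

/-- The σ-algebra generated by `θ(0), …, θ(k)`, for a realization of `θ`. -/
def sigFiltBar {NN MM T : ℕ} [NeZero T] {P : Matrix (Fin NN) (Fin NN) ℝ}
    {Q : Matrix (Fin MM) (Fin MM) ℝ} {f : Fin MM → Bool} (S : ThetaReal NN MM T P Q f)
    (k : ℕ) : MeasurableSpace S.Ω :=
  ⨆ j ∈ Finset.range (k + 1), MeasurableSpace.comap (S.θ j) inferInstance

/-- `Σ_K` satisfies `‖Σ_K‖∞² < γ`: there is `0 ≤ c < γ` such that `‖z‖₂² ≤ c ‖w‖₂²`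
for every realization, every deterministic initialization `r̄(0) = r̄₀ ∈ 𝔛`, and
every nonzero `w ∈ ℓ²(ℝ^q)` adapted to `(Θ_k)_k` (with `x₀ = 0`). -/
def HinfSqLtSigma {NN MM T n m q ℓ : ℕ} [NeZero T]
    (P : Matrix (Fin NN) (Fin NN) ℝ) (Qm : Matrix (Fin MM) (Fin MM) ℝ) (f : Fin MM → Bool)
    (A : Fin NN → Matrix (Fin n) (Fin n) ℝ) (B : Fin NN → Matrix (Fin n) (Fin m) ℝ)
    (C : Fin NN → Matrix (Fin ℓ) (Fin n) ℝ) (D : Fin NN → Matrix (Fin ℓ) (Fin m) ℝ)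
    (E : Fin NN → Matrix (Fin n) (Fin q) ℝ)
    (K : Fin NN → Fin T → Matrix (Fin m) (Fin n) ℝ) (γ : ℝ) : Prop :=
  ∃ c : ℝ, 0 ≤ c ∧ c < γ ∧
    ∀ (S : MJLSReal NN MM P Qm) (τ₀ : ℤ), τ₀ ≤ 0 → ∀ (σ₀ : Fin NN) (χ : XT NN MM T),
      inX f χ → (∀ᵐ ω ∂S.μ, rbarProc S.r S.s f τ₀ σ₀ 0 ω = χ) →
      ∀ (w : ℕ → S.Ω → Fin q → ℝ),
        (∀ k, Measurable[sigFiltSigma S k] (w k)) →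
        0 < (∑' k : ℕ, ∫⁻ ω, sqE (w k ω) ∂S.μ) →
        (∑' k : ℕ, ∫⁻ ω, sqE (w k ω) ∂S.μ) ≠ ⊤ →
        (∑' k : ℕ, ∫⁻ ω, sqE ((CKmat C D K (rbarProc S.r S.s f τ₀ σ₀ k ω)).mulVec
            (traj (AKmat A B K) (fun χ' => E χ'.1) (rbarProc S.r S.s f τ₀ σ₀) w 0 k ω)) ∂S.μ)
          ≤ ENNReal.ofReal c * (∑' k : ℕ, ∫⁻ ω, sqE (w k ω) ∂S.μ)

/-- `Σ̄_K` satisfies `‖Σ̄_K‖∞² < γ` (disturbances adapted to the filtration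
generated by `θ`). -/
def HinfSqLtBar {NN MM T n m q ℓ : ℕ} [NeZero T]
    (P : Matrix (Fin NN) (Fin NN) ℝ) (Qm : Matrix (Fin MM) (Fin MM) ℝ) (f : Fin MM → Bool)
    (A : Fin NN → Matrix (Fin n) (Fin n) ℝ) (B : Fin NN → Matrix (Fin n) (Fin m) ℝ)
    (C : Fin NN → Matrix (Fin ℓ) (Fin n) ℝ) (D : Fin NN → Matrix (Fin ℓ) (Fin m) ℝ)
    (E : Fin NN → Matrix (Fin n) (Fin q) ℝ)
    (K : Fin NN → Fin T → Matrix (Fin m) (Fin n) ℝ) (γ : ℝ) : Prop :=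
  ∃ c : ℝ, 0 ≤ c ∧ c < γ ∧
    ∀ (S : ThetaReal NN MM T P Qm f) (χ : XT NN MM T),
      inX f χ → (∀ᵐ ω ∂S.μ, S.θ 0 ω = χ) →
      ∀ (w : ℕ → S.Ω → Fin q → ℝ),
        (∀ k, Measurable[sigFiltBar S k] (w k)) →
        0 < (∑' k : ℕ, ∫⁻ ω, sqE (w k ω) ∂S.μ) →
        (∑' k : ℕ, ∫⁻ ω, sqE (w k ω) ∂S.μ) ≠ ⊤ →
        (∑' k : ℕ, ∫⁻ ω, sqE ((CKmat C D K (S.θ k ω)).mulVec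
            (traj (AKmat A B K) (fun χ' => E χ'.1) S.θ w 0 k ω)) ∂S.μ)
          ≤ ENNReal.ofReal c * (∑' k : ℕ, ∫⁻ ω, sqE (w k ω) ∂S.μ)

/-- The symmetric 4×4 block matrix appearing in the `H∞` LMI, with diagonal blocks
`D1, γ I_q, D3, I_ℓ`, sub-diagonal blocks `(3,1) = B31`, `(3,2) = B32`, `(4,1) = B41`,
the corresponding transposed blocks above the diagonal, and zeros elsewhere. -/
def hinfBlock {n q ℓ : ℕ} (γ : ℝ) (D1 D3 : Matrix (Fin n) (Fin n) ℝ)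
    (B31 : Matrix (Fin n) (Fin n) ℝ) (B32 : Matrix (Fin n) (Fin q) ℝ)
    (B41 : Matrix (Fin ℓ) (Fin n) ℝ) :
    Matrix ((Fin n ⊕ Fin q) ⊕ (Fin n ⊕ Fin ℓ)) ((Fin n ⊕ Fin q) ⊕ (Fin n ⊕ Fin ℓ)) ℝ :=
  Matrix.fromBlocks
    (Matrix.fromBlocks D1 0 0 (γ • (1 : Matrix (Fin q) (Fin q) ℝ)))
    (Matrix.fromBlocks B31ᵀ B41ᵀ B32ᵀ 0)
    (Matrix.fromBlocks B31 B32 B41 0)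
    (Matrix.fromBlocks D3 0 0 (1 : Matrix (Fin ℓ) (Fin ℓ) ℝ))

/-!
The extended process `r̄` obeys a recursion driven by the pair `(r, s)`: each new state of the pair
determines the next extended state from the remembered values `(σ, ρ)`. Since the pair of
independent chains is a Markov chain and can be read off from `r̄`, a path of `r̄` up to time `k`
either violates the recursion or is the same event as a path of the pair, so `r̄` is a Markov
chain with transition probabilities `p̄`. The transition probabilities and the law of the initial
state determine the law of the whole path, and the undisturbed trajectory is a measurable function
of the path of modes.
-/

section Path

variable {Ω S : Type*} {mΩ : MeasurableSpace Ω} [MeasurableSpace S] {μ : Measure Ω}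

theorem measurableSet_path_eq [MeasurableSingletonClass S] (k : ℕ) (i : ℕ → S) :
    MeasurableSet {p : ℕ → S | ∀ l ≤ k, p l = i l} :=
  .pi (Set.Iic k).to_countable fun l _ ↦ measurableSet_singleton (i l)

theorem measurableSet_next_eq_and_path_eq [MeasurableSingletonClass S] (k : ℕ) (j : S)
    (i : ℕ → S) : MeasurableSet {p : ℕ → S | p (k + 1) = j ∧ ∀ l ≤ k, p l = i l} :=
  ((measurableSet_singleton j).preimage (measurable_pi_apply (k + 1))).inter
    (measurableSet_path_eq k i)

theorem map_restrict_Iic_singleton [MeasurableSingletonClass S] {X : ℕ → Ω → S}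
    (hX : ∀ k, Measurable (X k)) (k : ℕ) (a : Finset.Iic k → S) :
    μ.map (fun ω ↦ (Finset.Iic k).restrict (X · ω)) {a}
      = μ {ω | ∀ l ≤ k, X l ω = a ⟨min l k, by simp⟩} := by
  rw [Measure.map_apply (by fun_prop) (measurableSet_singleton a)]
  congr 1
  ext ω
  simp only [Set.mem_preimage, Set.mem_singleton_iff, funext_iff, Finset.restrict,
    Subtype.forall, Finset.mem_Iic, Set.mem_ofPred_eq]
  exact forall₂_congr fun l hl ↦ by simp only [min_eq_left hl]

theorem identDistrib_path_of_measure_path_eq {Ω' : Type*} {mΩ' : MeasurableSpace Ω'}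
    {μ' : Measure Ω'} [IsFiniteMeasure μ'] [Countable S]
    [MeasurableSingletonClass S] {X : ℕ → Ω → S} {Y : ℕ → Ω' → S}
    (hX : ∀ k, Measurable (X k)) (hY : ∀ k, Measurable (Y k))
    (h : ∀ (k : ℕ) (i : ℕ → S),
      μ {ω | ∀ l ≤ k, X l ω = i l} = μ' {ω | ∀ l ≤ k, Y l ω = i l}) :
    IdentDistrib (fun ω l ↦ X l ω) (fun ω l ↦ Y l ω) μ μ' := by
  have hXm : AEMeasurable (fun ω l ↦ X l ω) μ := by fun_prop
  have hYm : AEMeasurable (fun ω l ↦ Y l ω) μ' := by fun_prop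
  have hIic (k : ℕ) : μ.map (fun ω ↦ (Finset.Iic k).restrict (X · ω))
      = μ'.map (fun ω ↦ (Finset.Iic k).restrict (Y · ω)) := by
    refine Measure.ext_of_singleton fun a ↦ ?_
    rw [map_restrict_Iic_singleton hX, map_restrict_Iic_singleton hY, h]
  have hfin (I : Finset ℕ) : μ.map (fun ω ↦ I.restrict (X · ω))
      = μ'.map (fun ω ↦ I.restrict (Y · ω)) := by
    have hI : I ⊆ Finset.Iic (I.sup id) := fun l hl ↦
      Finset.mem_Iic.2 (Finset.le_sup (f := id) hl)
    have hXI := isProjectiveMeasureFamily_map_restrict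
      (fun l ↦ (hX l).aemeasurable (μ := μ)) _ _ hI
    have hYI := isProjectiveMeasureFamily_map_restrict
      (fun l ↦ (hY l).aemeasurable (μ := μ')) _ _ hI
    beta_reduce at hXI hYI
    rw [hXI, hYI, hIic]
  refine ⟨hXm, hYm, ?_⟩
  have hlim := isProjectiveLimit_map hXm
  simp_rw [hfin] at hlim
  exact hlim.unique (isProjectiveLimit_map hYm)

end Path

namespace IsMarkovChain

variable {Ω Ω' S S' : Type} {mΩ : MeasurableSpace Ω} {mΩ' : MeasurableSpace Ω'}
  {μ : Measure Ω} {μ' : Measure Ω'} {X : ℕ → Ω → S} {P : S → S → ℝ}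

theorem measure_path_eq [IsFiniteMeasure μ] [IsFiniteMeasure μ'] {Y : ℕ → Ω' → S}
    (hX : IsMarkovChain μ X P) (hY : IsMarkovChain μ' Y P)
    (h0 : ∀ a, μ {ω | X 0 ω = a} = μ' {ω | Y 0 ω = a}) (k : ℕ) (i : ℕ → S) :
    μ {ω | ∀ l ≤ k, X l ω = i l} = μ' {ω | ∀ l ≤ k, Y l ω = i l} := by
  induction k with
  | zero => simpa using h0 (i 0)
  | succ k ih =>
    simp only [Nat.le_succ_iff_eq_or_le, forall_eq_or_imp]
    rw [← ENNReal.toReal_eq_toReal_iff' (measure_ne_top _ _) (measure_ne_top _ _),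
      hX, hY, ih]

theorem identDistrib_path [IsFiniteMeasure μ] [IsFiniteMeasure μ'] [Countable S]
    [MeasurableSpace S] [MeasurableSingletonClass S] {Y : ℕ → Ω' → S}
    (hX : IsMarkovChain μ X P) (hY : IsMarkovChain μ' Y P)
    (hXm : ∀ k, Measurable (X k)) (hYm : ∀ k, Measurable (Y k))
    (h0 : μ.map (X 0) = μ'.map (Y 0)) :
    IdentDistrib (fun ω l ↦ X l ω) (fun ω l ↦ Y l ω) μ μ' := by
  refine identDistrib_path_of_measure_path_eq hXm hYm (hX.measure_path_eq hY fun a ↦ ?_)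
  have h := congrArg (· {a}) h0
  simp only [Measure.map_apply (hXm 0) (measurableSet_singleton a),
    Measure.map_apply (hYm 0) (measurableSet_singleton a)] at h
  exact h

theorem prodMk [MeasurableSpace S] [MeasurableSingletonClass S] [MeasurableSpace S']
    [MeasurableSingletonClass S'] {Y : ℕ → Ω → S'} {Q : S' → S' → ℝ}
    (hX : IsMarkovChain μ X P) (hY : IsMarkovChain μ Y Q)
    (hXY : IndepFun (fun ω l ↦ X l ω) (fun ω l ↦ Y l ω) μ) :
    IsMarkovChain μ (fun k ω ↦ (X k ω, Y k ω)) (fun a b ↦ P a.1 b.1 * Q a.2 b.2) := by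
  intro k j i
  have hnext : {ω | (X (k + 1) ω, Y (k + 1) ω) = j ∧ ∀ l ≤ k, (X l ω, Y l ω) = i l}
      = (fun ω l ↦ X l ω) ⁻¹' {p | p (k + 1) = j.1 ∧ ∀ l ≤ k, p l = (i l).1} ∩
        (fun ω l ↦ Y l ω) ⁻¹' {p | p (k + 1) = j.2 ∧ ∀ l ≤ k, p l = (i l).2} := by
    ext ω
    simp only [Prod.ext_iff, Set.mem_ofPred_eq, Set.mem_inter_iff, Set.mem_preimage, forall_and]
    tauto
  have hpast : {ω | ∀ l ≤ k, (X l ω, Y l ω) = i l}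
      = (fun ω l ↦ X l ω) ⁻¹' {p | ∀ l ≤ k, p l = (i l).1} ∩
        (fun ω l ↦ Y l ω) ⁻¹' {p | ∀ l ≤ k, p l = (i l).2} := by
    ext ω
    simp only [Prod.ext_iff, Set.mem_ofPred_eq, Set.mem_inter_iff, Set.mem_preimage, forall_and]
  rw [hnext, hpast,
    hXY.measure_inter_preimage_eq_mul _ _ (measurableSet_next_eq_and_path_eq ..)
      (measurableSet_next_eq_and_path_eq ..),
    hXY.measure_inter_preimage_eq_mul _ _ (measurableSet_path_eq ..) (measurableSet_path_eq ..),
    ENNReal.toReal_mul, ENNReal.toReal_mul]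
  simp only [Set.preimage_ofPred_eq]
  rw [hX k j.1 fun l ↦ (i l).1, hY k j.2 fun l ↦ (i l).2]
  ring

end IsMarkovChain

/-- `Z` is an extension of the process `X` that evolves recursively: `Z(0) = h(X(0))` and
`Z(k+1) = g(Z(k), X(k+1))`, and `X(k) = π(Z(k))` can be recovered from `Z(k)`. -/
structure IsRecursiveExtension {Ω S U : Type*} (X : ℕ → Ω → S) (Z : ℕ → Ω → U) (π : U → S)
    (h : S → U) (g : U → S → U) : Prop where
  proj_eq : ∀ k ω, π (Z k ω) = X k ω
  zero_eq : ∀ ω, Z 0 ω = h (X 0 ω)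
  succ_eq : ∀ k ω, Z (k + 1) ω = g (Z k ω) (X (k + 1) ω)

namespace IsRecursiveExtension

section

variable {Ω S U : Type*} {X : ℕ → Ω → S} {Z : ℕ → Ω → U} {π : U → S} {h : S → U} {g : U → S → U}

theorem succ_eq_iff (hZ : IsRecursiveExtension X Z π h g) (k : ℕ) (ω : Ω) (u : U) :
    Z (k + 1) ω = u ↔ u = g (Z k ω) (π u) ∧ X (k + 1) ω = π u := by
  constructor
  · rintro rfl
    exact ⟨by rw [hZ.proj_eq, hZ.succ_eq], (hZ.proj_eq _ _).symm⟩
  · rintro ⟨hu, hX⟩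
    rw [hZ.succ_eq, hX, ← hu]

theorem path_eq_iff (hZ : IsRecursiveExtension X Z π h g) (k : ℕ) (ω : Ω) (i : ℕ → U) :
    (∀ l ≤ k, Z l ω = i l) ↔
      (i 0 = h (π (i 0)) ∧ ∀ l < k, i (l + 1) = g (i l) (π (i (l + 1)))) ∧
        ∀ l ≤ k, X l ω = π (i l) := by
  constructor
  · intro hi
    refine ⟨⟨?_, fun l hl ↦ ?_⟩, fun l hl ↦ ?_⟩
    · rw [← hi 0 k.zero_le, hZ.proj_eq, hZ.zero_eq]
    · rw [← hi l hl.le]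
      exact ((hZ.succ_eq_iff l ω _).1 (hi (l + 1) hl)).1
    · rw [← hi l hl, hZ.proj_eq]
  · rintro ⟨⟨h0, hsucc⟩, hX⟩ l hl
    induction l with
    | zero => rw [hZ.zero_eq, hX 0 hl, ← h0]
    | succ l ih => rw [hZ.succ_eq_iff, ih (by lia)]; exact ⟨hsucc l hl, hX _ hl⟩

theorem measurable [MeasurableSpace Ω] [MeasurableSpace S] [MeasurableSpace U]
    (hZ : IsRecursiveExtension X Z π h g) (hX : ∀ k, Measurable (X k)) (hh : Measurable h)
    (hg : Measurable g.uncurry) (k : ℕ) : Measurable (Z k) := by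
  induction k with
  | zero => exact (funext hZ.zero_eq : Z 0 = _) ▸ hh.comp (hX 0)
  | succ k ih => exact (funext (hZ.succ_eq k) : Z (k + 1) = _) ▸ hg.comp (ih.prodMk (hX (k + 1)))

end

theorem isMarkovChain {Ω S U : Type} [DecidableEq U] {mΩ : MeasurableSpace Ω} {μ : Measure Ω}
    {X : ℕ → Ω → S} {Z : ℕ → Ω → U} {π : U → S} {h : S → U} {g : U → S → U} {P : S → S → ℝ}
    (hZ : IsRecursiveExtension X Z π h g) (hX : IsMarkovChain μ X P) :
    IsMarkovChain μ Z (fun u v ↦ if v = g u (π v) then P (π u) (π v) else 0) := by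
  intro k j i
  have hnext (ω : Ω) : (Z (k + 1) ω = j ∧ ∀ l ≤ k, Z l ω = i l) ↔
      j = g (i k) (π j) ∧ X (k + 1) ω = π j ∧ ∀ l ≤ k, Z l ω = i l := by
    rw [← and_assoc]
    refine and_congr_left fun hi ↦ ?_
    rw [hZ.succ_eq_iff, hi k le_rfl]
  simp only [hnext]
  simp only [hZ.path_eq_iff]
  by_cases hj : j = g (i k) (π j)
  · by_cases hi : i 0 = h (π (i 0)) ∧ ∀ l < k, i (l + 1) = g (i l) (π (i (l + 1)))
    · simpa only [and_iff_right hj, and_iff_right hi, if_pos hj] using hX k (π j) fun l ↦ π (i l)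
    · simp [hi]
  · simp [hj]

end IsRecursiveExtension

section Observation

variable {Ω : Type} {NN MM T : ℕ} (r : ℕ → Ω → Fin NN) (s : ℕ → Ω → Fin MM) (f : Fin MM → Bool)
  (τ₀ : ℤ) (σ₀ : Fin NN) {k : ℕ} {ω : Ω}

theorem exists_observed_le_succ_iff (h : ¬ f (s (k + 1) ω) = true) :
    (∃ j ≤ k + 1, f (s j ω) = true) ↔ ∃ j ≤ k, f (s j ω) = true := by
  simp [Nat.le_succ_iff_eq_or_le, or_and_right, exists_or, h]

theorem tauZ_of_observed (h : f (s k ω) = true) : tauZ s f τ₀ k ω = k := by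
  rw [tauZ, if_pos ⟨k, le_rfl, h⟩, Nat.findGreatest_eq h]

theorem tauZ_zero_of_not_observed (h : ¬ f (s 0 ω) = true) : tauZ s f τ₀ 0 ω = τ₀ := by
  simp [tauZ, h]

theorem tauZ_succ_of_not_observed (h : ¬ f (s (k + 1) ω) = true) :
    tauZ s f τ₀ (k + 1) ω = tauZ s f τ₀ k ω := by
  simp only [tauZ, exists_observed_le_succ_iff s f h,
    Nat.findGreatest_of_not (P := fun j ↦ f (s j ω) = true) h]

theorem sigmaProc_of_observed (h : f (s k ω) = true) : sigmaProc r s f σ₀ k ω = r k ω := by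
  rw [sigmaProc, if_pos ⟨k, le_rfl, h⟩, Nat.findGreatest_eq h]

theorem sigmaProc_zero_of_not_observed (h : ¬ f (s 0 ω) = true) :
    sigmaProc r s f σ₀ 0 ω = σ₀ := by
  simp [sigmaProc, h]

theorem sigmaProc_succ_of_not_observed (h : ¬ f (s (k + 1) ω) = true) :
    sigmaProc r s f σ₀ (k + 1) ω = sigmaProc r s f σ₀ k ω := by
  simp only [sigmaProc, exists_observed_le_succ_iff s f h,
    Nat.findGreatest_of_not (P := fun j ↦ f (s j ω) = true) h]

variable [NeZero T]

theorem intToFin_zero : intToFin T 0 = 0 := by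
  ext
  simp [intToFin]

theorem intToFin_add_one (a : ℤ) : intToFin T (a + 1) = intToFin T a + 1 := by
  have hT : (T : ℤ) ≠ 0 := by exact_mod_cast NeZero.ne T
  ext
  zify
  simp [intToFin, Fin.val_add, Int.emod_nonneg _ hT, Int.add_emod]

theorem rhoProc_of_observed (h : f (s k ω) = true) : (rhoProc s f τ₀ k ω : Fin T) = 0 := by
  rw [rhoProc, tauZ_of_observed s f τ₀ h, sub_self, intToFin_zero]

theorem rhoProc_zero_of_not_observed (h : ¬ f (s 0 ω) = true) :
    (rhoProc s f τ₀ 0 ω : Fin T) = intToFin T (-τ₀) := by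
  rw [rhoProc, tauZ_zero_of_not_observed s f τ₀ h, Nat.cast_zero, zero_sub]

theorem rhoProc_succ_of_not_observed (h : ¬ f (s (k + 1) ω) = true) :
    (rhoProc s f τ₀ (k + 1) ω : Fin T) = rhoProc s f τ₀ k ω + 1 := by
  rw [rhoProc, rhoProc, tauZ_succ_of_not_observed s f τ₀ h, ← intToFin_add_one, Nat.cast_succ,
    sub_add_eq_add_sub]

end Observation

section ExtendedProcess

variable {NN MM T : ℕ} [NeZero T]

/-- The extended state `(α, β, γ, δ)` reached when the chains `(r, s)` are in state `x = (α, β)`: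
an observation resets the memory to `(α, 0)`, and otherwise the memory `c` takes over. Here `c` is
the pair of the last observed mode and the time elapsed since then modulo `T`, the latter already
advanced to the present. -/
def XT.ofMemory (f : Fin MM → Bool) (c : Fin NN × Fin T) (x : Fin NN × Fin MM) : XT NN MM T :=
  (x.1, x.2, if f x.2 = true then (x.1, 0) else c)

theorem isRecursiveExtension_rbarProc {Ω : Type} (r : ℕ → Ω → Fin NN) (s : ℕ → Ω → Fin MM)
    (f : Fin MM → Bool) (τ₀ : ℤ) (σ₀ : Fin NN) :
    IsRecursiveExtension (fun k ω ↦ (r k ω, s k ω)) (rbarProc (T := T) r s f τ₀ σ₀)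
      (fun χ ↦ (χ.1, χ.2.1)) (XT.ofMemory f (σ₀, intToFin T (-τ₀)))
      (fun χ ↦ XT.ofMemory f (χ.2.2.1, χ.2.2.2 + 1)) where
  proj_eq _ _ := rfl
  zero_eq ω := by
    by_cases h : f (s 0 ω) = true
    · simp only [rbarProc, XT.ofMemory, sigmaProc_of_observed r s f σ₀ h,
        rhoProc_of_observed s f τ₀ h, if_pos h]
    · simp only [rbarProc, XT.ofMemory, sigmaProc_zero_of_not_observed r s f σ₀ h,
        rhoProc_zero_of_not_observed s f τ₀ h, if_neg h]
  succ_eq k ω := by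
    by_cases h : f (s (k + 1) ω) = true
    · simp only [rbarProc, XT.ofMemory, sigmaProc_of_observed r s f σ₀ h,
        rhoProc_of_observed s f τ₀ h, if_pos h]
    · simp only [rbarProc, XT.ofMemory, sigmaProc_succ_of_not_observed r s f σ₀ h,
        rhoProc_succ_of_not_observed s f τ₀ h, if_neg h]

theorem pbar_eq_ite_ofMemory (P : Matrix (Fin NN) (Fin NN) ℝ) (Q : Matrix (Fin MM) (Fin MM) ℝ)
    (f : Fin MM → Bool) (χ χ' : XT NN MM T) :
    pbar P Q f χ χ' = if χ' = XT.ofMemory f (χ.2.2.1, χ.2.2.2 + 1) (χ'.1, χ'.2.1)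
      then P χ.1 χ'.1 * Q χ.2.1 χ'.2.1 else 0 := by
  obtain ⟨α', β', γ', δ'⟩ := χ'
  by_cases h : f β' = true <;>
    simp [pbar, XT.ofMemory, h, eq_comm (a := α')]

theorem isMarkovChain_rbarProc {Ω : Type} {mΩ : MeasurableSpace Ω} {μ : Measure Ω}
    {P : Matrix (Fin NN) (Fin NN) ℝ} {Q : Matrix (Fin MM) (Fin MM) ℝ}
    {r : ℕ → Ω → Fin NN} {s : ℕ → Ω → Fin MM}
    (hr : IsMarkovChain μ r P) (hs : IsMarkovChain μ s Q)
    (hrs : IndepFun (fun ω l ↦ r l ω) (fun ω l ↦ s l ω) μ)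
    (f : Fin MM → Bool) (τ₀ : ℤ) (σ₀ : Fin NN) :
    IsMarkovChain μ (rbarProc (T := T) r s f τ₀ σ₀) (pbar P Q f) := by
  rw [funext₂ (pbar_eq_ite_ofMemory P Q f)]
  exact (isRecursiveExtension_rbarProc r s f τ₀ σ₀).isMarkovChain (hr.prodMk hs hrs)

theorem measurable_rbarProc {Ω : Type} {_ : MeasurableSpace Ω}
    {r : ℕ → Ω → Fin NN} {s : ℕ → Ω → Fin MM}
    (hr : ∀ k, Measurable (r k)) (hs : ∀ k, Measurable (s k))
    (f : Fin MM → Bool) (τ₀ : ℤ) (σ₀ : Fin NN) (k : ℕ) :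
    Measurable (rbarProc (T := T) r s f τ₀ σ₀ k) :=
  (isRecursiveExtension_rbarProc r s f τ₀ σ₀).measurable (fun l ↦ (hr l).prodMk (hs l))
    .of_discrete .of_discrete k

end ExtendedProcess

section Trajectory

variable {Ω Ω' S : Type} {mΩ : MeasurableSpace Ω} {mΩ' : MeasurableSpace Ω'} {μ : Measure Ω}
  {μ' : Measure Ω'} {n q : ℕ} (A : S → Matrix (Fin n) (Fin n) ℝ)
  (E : S → Matrix (Fin n) (Fin q) ℝ)

theorem measurable_sqE {d : ℕ} : Measurable (sqE (d := d)) := by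
  unfold sqE
  fun_prop

theorem traj_eq_traj_path (X : ℕ → Ω → S) (w : ℕ → Fin q → ℝ) (x₀ : Fin n → ℝ) (k : ℕ) (ω : Ω) :
    traj A E X (fun k _ ↦ w k) x₀ k ω
      = traj A E (fun l p ↦ p l) (fun k _ ↦ w k) x₀ k (fun l ↦ X l ω) := by
  induction k with
  | zero => rfl
  | succ k ih => rw [traj, traj, ih]

variable [MeasurableSpace S] [DiscreteMeasurableSpace S]

theorem measurable_mulVec_comp {m d : ℕ} (M : S → Matrix (Fin m) (Fin d) ℝ) {X : Ω → S}
    (hX : Measurable X) {v : Ω → Fin d → ℝ} (hv : Measurable v) :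
    Measurable fun ω ↦ M (X ω) *ᵥ v ω := by
  have hM (i : Fin m) (j : Fin d) : Measurable fun ω ↦ M (X ω) i j :=
    (Measurable.of_discrete (f := fun a ↦ M a i j)).comp hX
  refine measurable_pi_lambda _ fun i ↦ ?_
  simp only [mulVec, dotProduct]
  exact Finset.measurable_fun_sum _ fun j _ ↦ (hM i j).mul ((measurable_pi_apply j).comp hv)

theorem measurable_traj {X : ℕ → Ω → S} (hX : ∀ k, Measurable (X k)) {w : ℕ → Ω → Fin q → ℝ}
    (hw : ∀ k, Measurable (w k)) (x₀ : Fin n → ℝ) (k : ℕ) :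
    Measurable (traj A E X w x₀ k) := by
  induction k with
  | zero => exact measurable_const
  | succ k ih =>
    exact (measurable_mulVec_comp A (hX k) ih).add (measurable_mulVec_comp E (hX k) (hw k))

theorem identDistrib_traj {X : ℕ → Ω → S} {Y : ℕ → Ω' → S}
    (hXY : IdentDistrib (fun ω l ↦ X l ω) (fun ω l ↦ Y l ω) μ μ') (w : ℕ → Fin q → ℝ)
    (x₀ : Fin n → ℝ) (k : ℕ) :
    IdentDistrib (traj A E X (fun k _ ↦ w k) x₀ k) (traj A E Y (fun k _ ↦ w k) x₀ k) μ μ' := by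
  rw [funext (traj_eq_traj_path A E X w x₀ k), funext (traj_eq_traj_path A E Y w x₀ k)]
  exact hXY.comp (measurable_traj A E measurable_pi_apply (fun _ ↦ measurable_const) x₀ k)

end Trajectory

/-- with `w ≡ 0`, `w̄ ≡ 0`, `x₀ = x̄₀`, and identically distributed
initial modes `r̄(0)` and `θ(0)`, one has `E[‖x(k)‖²] = E[‖x̄(k)‖²]` for all `k`. -/
theorem second_moment_eq
    {Ω Ω' : Type} [MeasurableSpace Ω] [MeasurableSpace Ω']
    (μ : Measure Ω) [IsProbabilityMeasure μ] (μ' : Measure Ω') [IsProbabilityMeasure μ']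
    {NN MM T n m q : ℕ} [NeZero NN] [NeZero MM] [NeZero T]
    [NeZero n] [NeZero m] [NeZero q]
    (P : Matrix (Fin NN) (Fin NN) ℝ) (Q : Matrix (Fin MM) (Fin MM) ℝ)
    (hP0 : ∀ i j, 0 ≤ P i j) (hP1 : ∀ i, ∑ j, P i j = 1)
    (hQ0 : ∀ i j, 0 ≤ Q i j) (hQ1 : ∀ i, ∑ j, Q i j = 1)
    (r : ℕ → Ω → Fin NN) (s : ℕ → Ω → Fin MM)
    (hmr : ∀ k, Measurable (r k)) (hms : ∀ k, Measurable (s k))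
    (hr : IsMarkovChain μ r fun i j => P i j) (hs : IsMarkovChain μ s fun i j => Q i j)
    (hind : IndepFun (fun ω l => r l ω) (fun ω l => s l ω) μ)
    (f : Fin MM → Bool) (τ₀ : ℤ) (hτ₀ : τ₀ ≤ 0) (σ₀ : Fin NN)
    (θ : ℕ → Ω' → XT NN MM T) (hmθ : ∀ k, Measurable (θ k))
    (hθX : ∀ k ω', inX f (θ k ω')) (hθ : IsMarkovChain μ' θ (pbar P Q f))
    (A : Fin NN → Matrix (Fin n) (Fin n) ℝ) (B : Fin NN → Matrix (Fin n) (Fin m) ℝ)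
    (E : Fin NN → Matrix (Fin n) (Fin q) ℝ)
    (K : Fin NN → Fin T → Matrix (Fin m) (Fin n) ℝ)
    (x0 : Fin n → ℝ)
    (hinit : Measure.map (rbarProc r s f τ₀ σ₀ 0) μ = Measure.map (θ 0) μ') :
    ∀ k : ℕ,
      (∫⁻ ω, sqE (traj (AKmat A B K) (fun χ => E χ.1) (rbarProc r s f τ₀ σ₀)
          (fun _ _ => 0) x0 k ω) ∂μ)
        = ∫⁻ ω', sqE (traj (AKmat A B K) (fun χ => E χ.1) θ
            (fun _ _ => 0) x0 k ω') ∂μ' := by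
  intro k
  have hrbar : IsMarkovChain μ (rbarProc (T := T) r s f τ₀ σ₀) (pbar P Q f) :=
    isMarkovChain_rbarProc hr hs hind f τ₀ σ₀
  have hpath : IdentDistrib (fun ω l ↦ rbarProc r s f τ₀ σ₀ l ω) (fun ω' l ↦ θ l ω') μ μ' :=
    hrbar.identDistrib_path hθ (measurable_rbarProc hmr hms f τ₀ σ₀) hmθ hinit
  have htraj := identDistrib_traj (AKmat A B K) (fun χ => E χ.1) hpath (fun _ ↦ 0) x0 k
  exact (htraj.comp measurable_sqE).lintegral_eq

end
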